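/- arXiv:1510.05795 — 2 statements merged into one kernel-verified Lean document; each statement's English description precedes it below -/
import Mathlib

section
/- Let p be an odd prime, c_p := (p−2)/(p−1), and M ∈ ℤ. Let (a_n)_{n≥0} be a sequence in ℚ_p with ‖a_n‖_p ≤ p^{-n·c_p} for all n, and let (μ_j)_{j≥0} be a sequence in ℤ_p with ‖μ_j‖_p ≤ p^{-(M - j·c_p)} for all j. Then for each j ≥ 0 the family (a_n·μ_{n+j})_{n≥0} is summable in ℚ_p, its sum ν_j lies in ℤ_p, and ‖ν_j‖_p ≤ p^{-(M - j·c_p)}. -/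
/-- Let `p` be an odd prime, `c_p = (p-2)/(p-1)`, `M ∈ ℤ`.
Let `(aₙ)` in `ℚ_p` with `‖aₙ‖ ≤ p^{-n c_p}` and `(μⱼ)` in `ℤ_p` with
`‖μⱼ‖ ≤ p^{-(M - j c_p)}`.  Then for each `j ≥ 0` the family `(aₙ μ_{n+j})ₙ` is
summable in `ℚ_p`, its sum `νⱼ` lies in `ℤ_p` (`‖νⱼ‖ ≤ 1`), and
`‖νⱼ‖ ≤ p^{-(M - j c_p)}`. -/
theorem stmt14 (p : ℕ) [Fact p.Prime] (hp : Odd p) (M : ℤ)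
    (a : ℕ → ℚ_[p])
    (ha : ∀ n : ℕ, ‖a n‖ ≤ (p : ℝ) ^ (-((n : ℝ) * (((p : ℝ) - 2) / ((p : ℝ) - 1)))))
    (μ : ℕ → ℤ_[p])
    (hμ : ∀ j : ℕ, ‖μ j‖ ≤
      (p : ℝ) ^ (-((M : ℝ) - (j : ℝ) * (((p : ℝ) - 2) / ((p : ℝ) - 1)))))
    (j : ℕ) :
    Summable (fun n : ℕ => a n * ((μ (n + j) : ℚ_[p]))) ∧
    ‖∑' n : ℕ, a n * ((μ (n + j) : ℚ_[p]))‖ ≤ 1 ∧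
    ‖∑' n : ℕ, a n * ((μ (n + j) : ℚ_[p]))‖ ≤
      (p : ℝ) ^ (-((M : ℝ) - (j : ℝ) * (((p : ℝ) - 2) / ((p : ℝ) - 1)))) := by
  have hp3 : (3 : ℝ) ≤ p := by
    have h2 := (Fact.out : p.Prime).two_le
    have h3 : 3 ≤ p := by
      obtain ⟨k, hk⟩ := hp
      omega
    exact_mod_cast h3
  have hp0 : (0 : ℝ) < p := by linarith
  have hc : 0 < ((p : ℝ) - 2) / ((p : ℝ) - 1) := div_pos (by linarith) (by linarith)
  generalize ((p : ℝ) - 2) / ((p : ℝ) - 1) = c at *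
  have hr0 : 0 ≤ (p : ℝ) ^ (-c) := Real.rpow_nonneg hp0.le _
  have hr1 : (p : ℝ) ^ (-c) < 1 := Real.rpow_lt_one_of_one_lt_of_neg (by linarith) (by linarith)
  have hμ1 : ∀ n, ‖(μ n : ℚ_[p])‖ ≤ 1 := fun n => (μ n).2
  have hle : ∀ n, ‖a n * (μ (n + j) : ℚ_[p])‖ ≤ ((p : ℝ) ^ (-c)) ^ n := by
    intro n
    rw [norm_mul, ← Real.rpow_natCast, ← Real.rpow_mul hp0.le]
    have h := ha n
    rw [show -((n : ℝ) * c) = -c * n by ring] at h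
    exact (mul_le_of_le_one_right (norm_nonneg _) (hμ1 _)).trans h
  have key : ∀ B : ℝ, (∀ n, ‖a n * (μ (n + j) : ℚ_[p])‖ ≤ B) →
      ‖∑' n : ℕ, a n * (μ (n + j) : ℚ_[p])‖ ≤ B := fun B hB =>
    (IsUltrametricDist.norm_tsum_le _).trans (ciSup_le hB)
  refine ⟨Summable.of_norm_bounded (summable_geometric_of_lt_one hr0 hr1) hle,
    key _ fun n => (hle n).trans (pow_le_one₀ hr0 hr1.le), key _ fun n => ?_⟩
  have h2 : ‖(μ (n + j) : ℚ_[p])‖ ≤ _ := hμ (n + j)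
  rw [norm_mul]
  refine (mul_le_mul (ha n) h2 (norm_nonneg _) (Real.rpow_nonneg hp0.le _)).trans_eq ?_
  rw [← Real.rpow_add hp0]
  congr 1
  push_cast
  ring
end

section
/- Let p be an odd prime, M ≥ 0 an integer, and let m be the unique integer with p^m ≤ M+1 < p^{m+1} (i.e. m = ⌊log(M+1)/log p⌋). Let B_k denote the k-th Bernoulli number (either standard sign convention for B_1). Then: (i) for all integers j, r with 1 ≤ j ≤ r+1 and r ≤ M, the rational number (p^m/j)·C(r, j−1)·B_{r−j+1} is a p-adic integer (its p-adic norm is at most 1); (ii) for all integers j, r with 1 ≤ j ≤ r+1 and r > M, the rational number (p^{r−M+m}/j)·C(r, j−1)·B_{r−j+1} is a p-adic integer. -/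
lemma aux_sum (p : ℕ) [Fact p.Prime] (k : ℕ) (C : ℝ) (hC : 1 ≤ C)
    (h : (p - 1 ∣ 2 * k ∧ 0 < k) → (p : ℝ) ≤ C) :
    ‖((bernoulli (2 * k) : ℚ) : ℚ_[p])‖ ≤ C := by
  have hpp : p.Prime := Fact.out
  obtain ⟨T, hT⟩ := Bernoulli.vonStaudt_clausen k
  have hB : bernoulli (2 * k) = (T : ℚ) -
      ∑ q ∈ Finset.range (2 * k + 2) with q.Prime ∧ (q - 1) ∣ 2 * k, (1 : ℚ) / q := by
    rw [hT]; ring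
  rw [hB]
  push_cast
  rw [sub_eq_add_neg]
  refine (Padic.nonarchimedean _ _).trans (max_le ((Padic.norm_int_le_one T).trans hC) ?_)
  rw [norm_neg]
  refine IsUltrametricDist.norm_sum_le_of_forall_le_of_nonneg (by linarith) ?_
  intro q hq
  simp only [Finset.mem_filter, Finset.mem_range] at hq
  obtain ⟨hlt, hqp, hdvd⟩ := hq
  by_cases hqe : q = p
  · subst hqe
    have hk : 0 < k := by have := hqp.two_le; omega
    simpa using h ⟨hdvd, hk⟩
  · have : ‖(q : ℚ_[p])‖ = 1 := by
      rw [Padic.norm_natCast_eq_one_iff]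
      exact (Nat.coprime_primes hpp hqp).2 (Ne.symm hqe)
    simpa [this] using hC

lemma aux_bern (p : ℕ) [Fact p.Prime] (hp : Odd p) (k : ℕ) (C : ℝ) (hC : 1 ≤ C)
    (h : (p - 1 ∣ k ∧ 0 < k) → (p : ℝ) ≤ C) :
    ‖((bernoulli k : ℚ) : ℚ_[p])‖ ≤ C := by
  have hpp : p.Prime := Fact.out
  rcases Nat.even_or_odd' k with ⟨l, rfl | rfl⟩
  · exact aux_sum p l C hC (fun hh => h ⟨hh.1, by omega⟩)
  · rcases Nat.eq_zero_or_pos l with rfl | hl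
    · have : ‖((2 : ℕ) : ℚ_[p])‖ = 1 := by
        rw [Padic.norm_natCast_eq_one_iff]
        exact (Nat.coprime_primes hpp Nat.prime_two).2 (by rintro rfl; exact absurd hp (by decide))
      have h2 : ‖(2 : ℚ_[p])‖ = 1 := by exact_mod_cast this
      simp [bernoulli_one, h2, hC]
    · rw [bernoulli_eq_zero_of_odd (by exact ⟨l, rfl⟩) (by omega)]
      simp; linarith

lemma aux_div (p : ℕ) [Fact p.Prime] (x s : ℕ) (hx : 0 < x) (h : ¬ p ^ (s + 1) ∣ x) :
    ‖((p : ℚ_[p]) ^ s / (x : ℚ_[p]))‖ ≤ 1 := by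
  have hpp : p.Prime := Fact.out
  obtain ⟨v, y, hy, rfl⟩ := Nat.exists_eq_pow_mul_and_not_dvd hx.ne' p hpp.ne_one
  have hv : v ≤ s := by
    by_contra hv
    exact h ((pow_dvd_pow p (by omega)).trans (dvd_mul_right _ _))
  obtain ⟨d, rfl⟩ := Nat.exists_eq_add_of_le hv
  have hy1 : ‖(y : ℚ_[p])‖ = 1 := by
    rw [Padic.norm_natCast_eq_one_iff]
    exact (Nat.Prime.coprime_iff_not_dvd hpp).2 hy
  have hp0 : (p : ℚ_[p]) ≠ 0 := by exact_mod_cast hpp.ne_zero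
  have : ((p : ℚ_[p]) ^ (v + d) / ((p ^ v * y : ℕ) : ℚ_[p])) = ((p ^ d : ℕ) : ℚ_[p]) / y := by
    have : (y : ℚ_[p]) ≠ 0 := by intro h0; simp [h0] at hy1
    push_cast; field_simp; ring
  rw [this, norm_div, hy1, div_one]
  exact_mod_cast Padic.norm_int_le_one (p := p) ((p ^ d : ℕ) : ℤ)

lemma aux_nat (p : ℕ) [Fact p.Prime] (c : ℕ) : ‖(c : ℚ_[p])‖ ≤ 1 := by
  exact_mod_cast Padic.norm_int_le_one (p := p) (c : ℤ)

lemma aux_core (p : ℕ) [Fact p.Prime] (hp : Odd p) (e j r : ℕ) (hj : 1 ≤ j) (hjr : j ≤ r + 1)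
    (hr : r + 1 < p ^ (e + 1)) :
    ‖((((p : ℚ) ^ e / (j : ℚ)) * (r.choose (j - 1) : ℚ) *
        bernoulli (r + 1 - j) : ℚ) : ℚ_[p])‖ ≤ 1 := by
  have hpp : p.Prime := Fact.out
  have hp1 : (1 : ℝ) ≤ p := by exact_mod_cast hpp.one_le
  push_cast
  have hj0 : ¬ p ^ (e + 1) ∣ j := fun h => by have := Nat.le_of_dvd hj h; omega
  by_cases hb : p - 1 ∣ r + 1 - j ∧ 0 < r + 1 - j
  · have hB := aux_bern p hp (r + 1 - j) p hp1 (fun _ => le_rfl)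
    -- either j or r+1 is not divisible by p^e
    have hnot : ¬ (p ^ e ∣ j ∧ p ^ e ∣ r + 1) := by
      rintro ⟨⟨a, rfl⟩, ⟨b, hb'⟩⟩
      rw [hb', ← Nat.mul_sub] at hb
      have hcop : Nat.Coprime (p - 1) (p ^ e) := by
        apply Nat.Coprime.pow_right
        have := Nat.coprime_self_sub_left (n := p) (m := 1) hpp.one_le
        simpa using this
      have h1 := hcop.dvd_of_dvd_mul_left hb.1
      have h2 : 0 < b - a := Nat.pos_of_mul_pos_left hb.2
      have h3 := Nat.le_of_dvd h2 h1
      have hbp : b < p := by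
        rw [hb', pow_succ] at hr
        exact lt_of_mul_lt_mul_left hr (Nat.zero_le _)
      have ha : 0 < a := by
        rcases Nat.eq_zero_or_pos a with rfl | h
        · simp at hj
        · exact h
      omega
    obtain ⟨s, rfl⟩ : ∃ s, e = s + 1 := by
      rcases e with _ | s
      · simp at hnot
      · exact ⟨s, rfl⟩
    have key : ‖(p : ℚ_[p]) ^ s / (j : ℚ_[p]) * (r.choose (j - 1) : ℚ_[p])‖ ≤ 1 := by
      by_cases hd : p ^ (s + 1) ∣ j
      · have hd' : ¬ p ^ (s + 1) ∣ r + 1 := fun h => hnot ⟨hd, h⟩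
        have hid : (p : ℚ_[p]) ^ s / (j : ℚ_[p]) * (r.choose (j - 1) : ℚ_[p]) =
            (p : ℚ_[p]) ^ s / ((r + 1 : ℕ) : ℚ_[p]) * ((r + 1).choose j : ℚ_[p]) := by
          obtain ⟨i, rfl⟩ : ∃ i, j = i + 1 := ⟨j - 1, by omega⟩
          have := Nat.add_one_mul_choose_eq r i
          have h' : ((r + 1 : ℕ) : ℚ_[p]) * (r.choose i : ℚ_[p]) =
            ((r + 1).choose (i + 1) : ℚ_[p]) * ((i + 1 : ℕ) : ℚ_[p]) := by exact_mod_cast this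
          have n1 : ((r + 1 : ℕ) : ℚ_[p]) ≠ 0 := by exact_mod_cast Nat.succ_ne_zero r
          have n2 : ((i + 1 : ℕ) : ℚ_[p]) ≠ 0 := by exact_mod_cast Nat.succ_ne_zero i
          rw [Nat.add_sub_cancel, div_mul_eq_mul_div, div_mul_eq_mul_div, div_eq_div_iff n2 n1]
          linear_combination (p : ℚ_[p]) ^ s * h'
        rw [hid, norm_mul]
        exact mul_le_one₀ (aux_div p _ s (by omega) hd') (norm_nonneg _) (aux_nat p _)
      · rw [norm_mul]
        exact mul_le_one₀ (aux_div p _ s (by omega) hd) (norm_nonneg _) (aux_nat p _)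
    have hre : (p : ℚ_[p]) ^ (s + 1) / (j : ℚ_[p]) * (r.choose (j - 1) : ℚ_[p]) *
        ((bernoulli (r + 1 - j) : ℚ) : ℚ_[p]) =
        ((p : ℚ_[p]) ^ s / (j : ℚ_[p]) * (r.choose (j - 1) : ℚ_[p])) *
        (p * ((bernoulli (r + 1 - j) : ℚ) : ℚ_[p])) := by ring
    rw [hre, norm_mul]
    refine mul_le_one₀ key (norm_nonneg _) ?_
    rw [norm_mul, Padic.norm_p]
    calc (p : ℝ)⁻¹ * _ ≤ (p : ℝ)⁻¹ * p := by gcongr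
      _ = 1 := inv_mul_cancel₀ (by linarith)
  · have hB := aux_bern p hp (r + 1 - j) 1 le_rfl (fun h => absurd h hb)
    rw [norm_mul, norm_mul]
    exact mul_le_one₀ (mul_le_one₀ (aux_div p j e hj hj0) (norm_nonneg _) (aux_nat p _))
      (norm_nonneg _) hB

/-- Let `p` be an odd prime, `M ≥ 0`, and `m` the unique integer
with `p^m ≤ M+1 < p^{m+1}`.  With `B_k` the `k`-th Bernoulli number:
(i) for `1 ≤ j ≤ r+1` and `r ≤ M`, `(p^m/j)·C(r,j-1)·B_{r-j+1}` is a `p`-adic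
integer; (ii) for `1 ≤ j ≤ r+1` and `r > M`, `(p^{r-M+m}/j)·C(r,j-1)·B_{r-j+1}` is
a `p`-adic integer. -/
theorem stmt15 (p : ℕ) [Fact p.Prime] (hp : Odd p) (M m : ℕ)
    (hm1 : p ^ m ≤ M + 1) (hm2 : M + 1 < p ^ (m + 1)) :
    (∀ j r : ℕ, 1 ≤ j → j ≤ r + 1 → r ≤ M →
      ‖((((p : ℚ) ^ m / (j : ℚ)) * (r.choose (j - 1) : ℚ) *
        bernoulli (r + 1 - j) : ℚ) : ℚ_[p])‖ ≤ 1) ∧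
    (∀ j r : ℕ, 1 ≤ j → j ≤ r + 1 → M < r →
      ‖((((p : ℚ) ^ (r - M + m) / (j : ℚ)) * (r.choose (j - 1) : ℚ) *
        bernoulli (r + 1 - j) : ℚ) : ℚ_[p])‖ ≤ 1) := by
  refine ⟨fun j r hj hjr hr => aux_core p hp m j r hj hjr (by omega),
    fun j r hj hjr hr => aux_core p hp (r - M + m) j r hj hjr ?_⟩
  have hpp : p.Prime := Fact.out
  have key : ∀ d : ℕ, M + 1 + d < p ^ (m + 1 + d) := by
    intro d
    induction d with
    | zero => simpa using hm2
    | succ d ih =>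
      have := hpp.two_le
      have h2 : p ^ (m + 1 + d) * 2 ≤ p ^ (m + 1 + (d + 1)) := by
        rw [← add_assoc, pow_succ]; gcongr
      omega
  have := key (r - M)
  rw [show r - M + m + 1 = m + 1 + (r - M) by omega]
  omega
end
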